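/- arXiv:2602.07530 — 3 statements merged into one kernel-verified Lean document; each statement's English description precedes it below -/
import Mathlib

section
/- Let H = (V, 𝓔) be a finite weighted hypergraph with |V| = n, and for λ ≥ 0 and K ⊆ V define Φ(K, λ) = |K| − λ · e(K). Then there exists a chain of subsets ∅ = S₀ ⊆ S₁ ⊆ S₂ ⊆ ⋯ ⊆ S_k ⊆ V with k ≤ n such that for every λ ≥ 0, at least one set S_i in the chain minimizes Φ(·, λ) over all subsets of V. -/
open Finset

/-- Total induced weight of hyperedges contained in `K`. -/
noncomputable def inducedWeight {V : Type*} [DecidableEq V]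
    (𝓔 : Finset (Finset V)) (w : Finset V → ℝ) (K : Finset V) : ℝ :=
  ∑ e ∈ 𝓔.filter (fun e => e ⊆ K), w e

/-- The Lagrangian objective `Φ(K, λ) = |K| - λ·e(K)`. -/
noncomputable def lagObj {V : Type*} [DecidableEq V]
    (𝓔 : Finset (Finset V)) (w : Finset V → ℝ) (K : Finset V) (lam : ℝ) : ℝ :=
  (K.card : ℝ) - lam * inducedWeight 𝓔 w K

/-!
This is Topkis' monotone comparative statics. Each `Φ(·, λ)` with `λ ≥ 0` is submodular and, for
`λ ≤ μ`, the difference `Φ(·, μ) - Φ(·, λ)` is antitone. Hence if `A` minimizes `Φ(·, λ)` and `B`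
minimizes `Φ(·, μ)`, then `A ∩ B` still minimizes `Φ(·, λ)`: the case `λ = μ` shows that least
minimizers exist, and the general case that they increase with `λ`. The least minimizers therefore
form a chain of subsets of `V`, which can be indexed by cardinality.
-/

section Submodular

variable {α β : Type*}

/-- The set of global minimizers of `φ`, possibly empty. -/
def minimizers [LE β] (φ : α → β) : Set α :=
  {a | ∀ x, φ a ≤ φ x}

/-- Submodularity of a function on a lattice; on `Finset V` this is submodularity of a set
function. -/
def IsSubmodular [Lattice α] [Add β] [LE β] (φ : α → β) : Prop :=
  ∀ a b, φ (a ⊓ b) + φ (a ⊔ b) ≤ φ a + φ b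

theorem exists_isLeast_of_infClosed [SemilatticeInf α] [WellFoundedLT α] {s : Set α}
    (hs : InfClosed s) (hne : s.Nonempty) : ∃ a, IsLeast s a := by
  obtain ⟨a, ha⟩ := exists_minimal_of_wellFoundedLT (· ∈ s) hne
  exact ⟨a, ha.prop, fun b hb =>
    (ha.le_of_le (hs ha.prop hb) inf_le_left).trans inf_le_right⟩

namespace IsSubmodular

variable [Lattice α] [AddCommGroup β]

theorem inf_mem_minimizers [PartialOrder β] [IsOrderedAddMonoid β] {φ ψ : α → β} {a b : α}
    (hφ : IsSubmodular φ) (hψφ : Antitone (ψ - φ))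
    (ha : a ∈ minimizers φ) (hb : b ∈ minimizers ψ) : a ⊓ b ∈ minimizers φ := by
  have hb_le : φ b ≤ φ (a ⊔ b) := by
    have hdiff : ψ (a ⊔ b) - φ (a ⊔ b) ≤ ψ b - φ b := hψφ le_sup_right
    exact (sub_le_sub_iff_left (ψ b)).1 ((sub_le_sub_right (hb (a ⊔ b)) _).trans hdiff)
  have hinf_le : φ (a ⊓ b) ≤ φ a := by
    refine le_of_add_le_add_right (a := φ b) ?_
    calc φ (a ⊓ b) + φ b ≤ φ (a ⊓ b) + φ (a ⊔ b) := by gcongr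
      _ ≤ φ a + φ b := hφ a b
  exact fun x => hinf_le.trans (ha x)

theorem infClosed_minimizers [PartialOrder β] [IsOrderedAddMonoid β] {φ : α → β}
    (hφ : IsSubmodular φ) : InfClosed (minimizers φ) := by
  have hself : Antitone (φ - φ) := by
    rw [sub_self]
    exact antitone_const
  exact fun _ ha _ hb => hφ.inf_mem_minimizers hself ha hb

theorem le_of_isLeast_minimizers [PartialOrder β] [IsOrderedAddMonoid β] {φ ψ : α → β} {a b : α}
    (hφ : IsSubmodular φ) (hψφ : Antitone (ψ - φ))
    (ha : IsLeast (minimizers φ) a) (hb : b ∈ minimizers ψ) : a ≤ b :=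
  (ha.2 (hφ.inf_mem_minimizers hψφ ha.1 hb)).trans inf_le_right

theorem exists_isLeast_minimizers [Finite α] [Nonempty α] [LinearOrder β] [IsOrderedAddMonoid β]
    {φ : α → β} (hφ : IsSubmodular φ) : ∃ a, IsLeast (minimizers φ) a :=
  exists_isLeast_of_infClosed hφ.infClosed_minimizers (Finite.exists_min φ)

theorem exists_monotone_mem_minimizers [Finite α] [Nonempty α] [LinearOrder β]
    [IsOrderedAddMonoid β] {ι : Type*} [Preorder ι] {φ : ι → α → β}
    (hφ : ∀ t, IsSubmodular (φ t)) (hdiff : ∀ ⦃s t⦄, s ≤ t → Antitone (φ t - φ s)) :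
    ∃ m : ι → α, Monotone m ∧ ∀ t, m t ∈ minimizers (φ t) := by
  choose m hm using fun t => (hφ t).exists_isLeast_minimizers
  exact ⟨m, fun s t hst => (hφ s).le_of_isLeast_minimizers (hdiff hst) (hm s) (hm t).1,
    fun t => (hm t).1⟩

end IsSubmodular

end Submodular

section Chain

variable {V : Type*} {C : Set (Finset V)}

theorem subset_of_isChain_of_card_le (hC : IsChain (· ⊆ ·) C) {A B : Finset V}
    (hA : A ∈ C) (hB : B ∈ C) (hcard : #A ≤ #B) : A ⊆ B :=
  (hC.total hA hB).elim id fun hBA => (eq_of_subset_of_card_le hBA hcard).ge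

theorem finite_setOf_card_le_of_isChain (hC : IsChain (· ⊆ ·) C) (i : ℕ) :
    {A ∈ C | #A ≤ i}.Finite := by
  refine Set.Finite.of_injOn (f := card) (t := Set.Iic i) (fun A hA => hA.2) ?_ (Set.finite_Iic i)
  intro A hA B hB hcard
  exact (subset_of_isChain_of_card_le hC hA.1 hB.1 hcard.le).antisymm
    (subset_of_isChain_of_card_le hC hB.1 hA.1 hcard.ge)

theorem exists_monotone_apply_card_eq_of_isChain (hC : IsChain (· ⊆ ·) C) :
    ∃ S : ℕ → Finset V, Monotone S ∧ S 0 = ∅ ∧ ∀ A ∈ C, S #A = A := by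
  classical
  have hfin := finite_setOf_card_le_of_isChain hC
  refine ⟨fun i => (hfin i).toFinset.sup id, fun i j hij => ?_, ?_, fun A hA => ?_⟩
  · exact sup_mono (Set.Finite.toFinset_mono fun A hA => ⟨hA.1, hA.2.trans hij⟩)
  · refine (Finset.sup_eq_bot_iff _ _).2 fun A hA => ?_
    exact card_eq_zero.1 (Nat.le_zero.1 ((hfin 0).mem_toFinset.1 hA).2)
  · refine le_antisymm (Finset.sup_le fun B hB => ?_) (le_sup (f := id) ?_)
    · obtain ⟨hBC, hcard⟩ := (hfin #A).mem_toFinset.1 hB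
      exact subset_of_isChain_of_card_le hC hBC hA hcard
    · exact (hfin #A).mem_toFinset.2 ⟨hA, le_rfl⟩

end Chain

section Hypergraph

variable {V : Type*} [DecidableEq V] {𝓔 : Finset (Finset V)} {w : Finset V → ℝ}

theorem inducedWeight_mono (hw : ∀ e ∈ 𝓔, 0 ≤ w e) : Monotone (inducedWeight 𝓔 w) := by
  intro A B hAB
  refine sum_le_sum_of_subset_of_nonneg ?_ fun e he _ => hw e (mem_filter.1 he).1
  exact monotone_filter_right 𝓔 fun e _ heA => heA.trans hAB

theorem inducedWeight_add_le (hw : ∀ e ∈ 𝓔, 0 ≤ w e) (A B : Finset V) :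
    inducedWeight 𝓔 w A + inducedWeight 𝓔 w B ≤
      inducedWeight 𝓔 w (A ∪ B) + inducedWeight 𝓔 w (A ∩ B) := by
  have hinter : {e ∈ 𝓔 | e ⊆ A} ∩ {e ∈ 𝓔 | e ⊆ B} = {e ∈ 𝓔 | e ⊆ A ∩ B} := by
    simp only [← filter_and, subset_inter_iff]
  have hunion : {e ∈ 𝓔 | e ⊆ A} ∪ {e ∈ 𝓔 | e ⊆ B} ⊆ {e ∈ 𝓔 | e ⊆ A ∪ B} :=
    union_subset
      (monotone_filter_right 𝓔 fun e _ heA => heA.trans subset_union_left)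
      (monotone_filter_right 𝓔 fun e _ heB => heB.trans subset_union_right)
  unfold inducedWeight
  rw [← sum_union_inter, hinter]
  exact add_le_add
    (sum_le_sum_of_subset_of_nonneg hunion fun e he _ => hw e (mem_filter.1 he).1) le_rfl

theorem isSubmodular_lagObj (hw : ∀ e ∈ 𝓔, 0 ≤ w e) {lam : ℝ} (hlam : 0 ≤ lam) :
    IsSubmodular (lagObj 𝓔 w · lam) := by
  intro A B
  have hcard : (#(A ∪ B) : ℝ) + #(A ∩ B) = #A + #B := mod_cast card_union_add_card_inter A B
  have hweight := mul_le_mul_of_nonneg_left (inducedWeight_add_le hw A B) hlam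
  simp only [lagObj, inf_eq_inter, sup_eq_union]
  linarith

theorem antitone_lagObj_sub_lagObj (hw : ∀ e ∈ 𝓔, 0 ≤ w e) {lam mu : ℝ} (hle : lam ≤ mu) :
    Antitone ((lagObj 𝓔 w · mu) - (lagObj 𝓔 w · lam)) := by
  intro A B hAB
  have hweight := mul_le_mul_of_nonneg_left (inducedWeight_mono hw hAB) (sub_nonneg.2 hle)
  simp only [Pi.sub_apply, lagObj]
  linarith

end Hypergraph

theorem lagrangian_minimizer_chain_general {V ι β : Type*} [Fintype V] [DecidableEq V]
    [LinearOrder ι] [AddCommGroup β] [LinearOrder β] [IsOrderedAddMonoid β]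
    {φ : ι → Finset V → β} (hφ : ∀ t, IsSubmodular (φ t))
    (hdiff : ∀ ⦃s t⦄, s ≤ t → Antitone (φ t - φ s)) :
    ∃ S : ℕ → Finset V, S 0 = ∅ ∧ Monotone S ∧
      ∀ t, ∃ i ≤ Fintype.card V, S i ∈ minimizers (φ t) := by
  obtain ⟨m, hm_mono, hm⟩ := IsSubmodular.exists_monotone_mem_minimizers hφ hdiff
  obtain ⟨S, hS_mono, hS_zero, hS⟩ :=
    exists_monotone_apply_card_eq_of_isChain hm_mono.isChain_range
  refine ⟨S, hS_zero, hS_mono, fun t => ⟨#(m t), card_le_univ _, ?_⟩⟩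
  rw [hS _ ⟨t, rfl⟩]
  exact hm t

/-- there is a single chain `∅ = S₀ ⊆ S₁ ⊆ ⋯ ⊆ S_k ⊆ V` with
`k ≤ n = |V|` such that for every `λ ≥ 0` some set in the chain minimizes the
Lagrangian objective `Φ(·, λ)` over all subsets of `V`. -/
theorem lagrangian_minimizer_chain {V : Type*} [Fintype V] [DecidableEq V]
    (𝓔 : Finset (Finset V)) (w : Finset V → ℝ) (hw : ∀ e ∈ 𝓔, 0 ≤ w e) :
    ∃ (k : ℕ) (S : ℕ → Finset V),
      k ≤ Fintype.card V ∧
      S 0 = ∅ ∧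
      (∀ i j, i ≤ j → j ≤ k → S i ⊆ S j) ∧
      (∀ lam : ℝ, 0 ≤ lam →
        ∃ i ≤ k, ∀ K : Finset V, lagObj 𝓔 w (S i) lam ≤ lagObj 𝓔 w K lam) := by
  obtain ⟨S, hS_zero, hS_mono, hS⟩ := lagrangian_minimizer_chain_general
    (φ := fun (lam : Set.Ici (0 : ℝ)) K => lagObj 𝓔 w K lam)
    (fun lam => isSubmodular_lagObj hw lam.2) (fun _ _ hle => antitone_lagObj_sub_lagObj hw hle)
  exact ⟨Fintype.card V, S, le_rfl, hS_zero, fun _ _ hij _ => hS_mono hij,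
    fun lam hlam => hS ⟨lam, hlam⟩⟩
end

section
/- Let 𝒳 be a measurable space and let S₁ ⊆ S₂ ⊆ ⋯ ⊆ S_k be fixed measurable subsets of 𝒳 with S_k = 𝒳. Let Y₁, …, Y_{m+1} be exchangeable 𝒳-valued random variables. For each i define η_i = min{ j ∈ {1,…,k} : Y_i ∈ S_j } (well-defined since S_k = 𝒳). Let φ ∈ (0,1), set t = ⌈φ(m+1)⌉, assume t ≤ m, and let j* be the t-th smallest value among η₁, …, η_m. Then ℙ(Y_{m+1} ∈ S_{j*}) ≥ φ. -/
open MeasureTheory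

/-- The `t`-th smallest value among `a 0, …, a (m-1)` (the `t`-th order
statistic, for `1 ≤ t ≤ m`): the least `q` such that at least `t` of the
values are `≤ q`. -/
noncomputable def kthSmallest {n : ℕ} {α : Type*} [ConditionallyCompleteLinearOrder α]
    (a : Fin n → α) (k : ℕ) : α :=
  sInf {q : α | k ≤ (Finset.univ.filter (fun i => a i ≤ q)).card}

/-- The index score `η = min { j ∈ {1,…,k} : y ∈ S j }` of a point `y` with
respect to the nested family `S 1 ⊆ ⋯ ⊆ S k` (well-defined when `S k = univ`). -/
noncomputable def nestedIndex {𝒳 : Type*} (S : ℕ → Set 𝒳) (k : ℕ) (y : 𝒳) : ℕ :=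
  sInf {j : ℕ | 1 ≤ j ∧ j ≤ k ∧ y ∈ S j}

/-!
Among `m + 1` scores at least `t` have fewer than `t` scores strictly below them. By exchangeability
this event has the same probability for every index, so that probability is at least
`t / (m + 1) ≥ φ`. When it occurs for the last score, that score is at most the `t`-th smallest of
the first `m`. For the score `nestedIndex`, being at most `q` means lying in `S q`.
-/

section StrictRank

variable {ι α : Type*} [Fintype ι] [LinearOrder α]

/-- The number of entries of `a` strictly below the entry `a i`: the zero-based rank of `a i`, with
tied entries sharing the lowest rank available to them. -/
def strictRank (a : ι → α) (i : ι) : ℕ :=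
  (Finset.univ.filter fun j => a j < a i).card

lemma strictRank_comp_perm (a : ι → α) (σ : Equiv.Perm ι) (i : ι) :
    strictRank (fun j => a (σ j)) i = strictRank a (σ i) :=
  Finset.card_equiv σ (by simp)

lemma le_card_strictRank_lt (a : ι → α) {t : ℕ} (ht : t ≤ Fintype.card ι) :
    t ≤ (Finset.univ.filter fun i => strictRank a i < t).card := by
  by_cases hlow : ∀ i, strictRank a i < t
  · rwa [Finset.filter_true_of_mem fun i _ => hlow i]
  -- Everything strictly below a minimal entry of rank at least `t` has rank less than `t`.
  · obtain ⟨i, hi, hmin⟩ :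
        ∃ i, t ≤ strictRank a i ∧ ∀ j, t ≤ strictRank a j → a i ≤ a j := by
      simpa using Finset.exists_min_image (Finset.univ.filter fun i => t ≤ strictRank a i) a
        (by simpa [Finset.Nonempty] using hlow)
    refine hi.trans (Finset.card_le_card (Finset.monotone_filter_right _ fun j _ hj => ?_))
    exact lt_of_not_ge fun hrank => hj.not_ge (hmin j hrank)

lemma measurable_strictRank [TopologicalSpace α] [OrderClosedTopology α]
    [SecondCountableTopology α] [MeasurableSpace α] [OpensMeasurableSpace α] (i : ι) :
    Measurable fun a : ι → α => strictRank a i := by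
  simp only [strictRank, Finset.card_filter]
  exact Finset.measurable_sum _ fun j _ => Measurable.ite
    (measurableSet_lt (measurable_pi_apply j) (measurable_pi_apply i))
    measurable_const measurable_const

end StrictRank

section KthSmallest

variable {α : Type*} [ConditionallyCompleteLinearOrder α] {m t : ℕ}

lemma kthSmallest_le_of_forall_le {a : Fin m → α} {b : α} (ht : 0 < t) (htm : t ≤ m)
    (hb : ∀ i, a i ≤ b) : kthSmallest a t ≤ b := by
  have : Nonempty α := ⟨b⟩
  obtain ⟨l, hl⟩ := (Set.finite_range a).bddBelow
  refine csInf_le ⟨l, fun q hq => ?_⟩ (by simpa [hb] using htm)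
  obtain ⟨i, hi⟩ := Finset.card_pos.mp (ht.trans_le hq)
  exact (hl ⟨i, rfl⟩).trans (Finset.mem_filter.mp hi).2

lemma le_kthSmallest_of_strictRank_last_lt {a : Fin (m + 1) → α} (htm : t ≤ m)
    (hrank : strictRank a (Fin.last m) < t) :
    a (Fin.last m) ≤ kthSmallest (fun i : Fin m => a i.castSucc) t := by
  have : Nonempty α := ⟨a 0⟩
  obtain ⟨u, hu⟩ := (Set.finite_range a).bddAbove
  have hau (i : Fin (m + 1)) : a i ≤ u := hu ⟨i, rfl⟩
  refine le_csInf ⟨u, by simpa [hau] using htm⟩ fun q hq => ?_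
  by_contra! hlt
  have hcard : (Finset.univ.filter fun i : Fin m => a i.castSucc ≤ q).card ≤
      strictRank a (Fin.last m) :=
    Finset.card_le_card_of_injOn Fin.castSucc
      (fun i hi => by simpa using (Finset.mem_filter.mp hi).2.trans_lt hlt)
      (Fin.castSucc_injective m).injOn
  exact (hq.trans hcard).not_gt hrank

end KthSmallest

open scoped Classical in
lemma natCast_mul_measure_univ_le_sum_measure {Ω ι : Type*} [MeasurableSpace Ω] [Fintype ι]
    {μ : Measure Ω} {A : ι → Set Ω} (hA : ∀ i, NullMeasurableSet (A i) μ) {t : ℕ}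
    (ht : ∀ ω, t ≤ (Finset.univ.filter fun i => ω ∈ A i).card) :
    t * μ Set.univ ≤ ∑ i, μ (A i) :=
  calc t * μ Set.univ = ∫⁻ _, t ∂μ := (lintegral_const _).symm
    _ ≤ ∫⁻ ω, ∑ i, (A i).indicator 1 ω ∂μ := lintegral_mono fun ω => by
      simpa [Set.indicator_apply] using ht ω
    _ = ∑ i, ∫⁻ ω, (A i).indicator 1 ω ∂μ :=
      lintegral_finsetSum' _ fun i _ => aemeasurable_one.indicator₀ (hA i)
    _ = ∑ i, μ (A i) := Finset.sum_congr rfl fun i _ => lintegral_indicator_one₀ (hA i)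

/-- The family `X` is exchangeable under `μ`: permuting its indices does not change its joint law.
Using `IdentDistrib` makes almost everywhere measurability of the joint variable part of the
notion. -/
def Exchangeable {Ω ι E : Type*} [MeasurableSpace Ω] [MeasurableSpace E]
    (X : ι → Ω → E) (μ : Measure Ω) : Prop :=
  ∀ σ : Equiv.Perm ι, ProbabilityTheory.IdentDistrib (fun ω i => X (σ i) ω) (fun ω i => X i ω) μ μ

namespace Exchangeable

variable {Ω ι E F α : Type*} [MeasurableSpace Ω] [MeasurableSpace E] [MeasurableSpace F]
  {μ : Measure Ω}

lemma comp_measurable {X : ι → Ω → E} (hX : Exchangeable X μ) {f : E → F} (hf : Measurable f) :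
    Exchangeable (fun i ω => f (X i ω)) μ := fun σ =>
  (hX σ).comp (measurable_pi_lambda _ fun i => hf.comp (measurable_pi_apply i))

variable [LinearOrder α] [TopologicalSpace α] [OrderClosedTopology α] [SecondCountableTopology α]
  [MeasurableSpace α] [OpensMeasurableSpace α]

lemma measure_strictRank_lt_eq [Fintype ι] {X : ι → Ω → α} (hX : Exchangeable X μ) (t : ℕ)
    (i j : ι) :
    μ {ω | strictRank (fun l => X l ω) i < t} = μ {ω | strictRank (fun l => X l ω) j < t} := by
  classical
  have hswap := (hX (Equiv.swap i j)).measure_mem_eq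
    (measurable_strictRank j (measurableSet_Iio (a := t)))
  have hrank (ω : Ω) : strictRank (fun l => X (Equiv.swap i j l) ω) j =
      strictRank (fun l => X l ω) i := by
    rw [strictRank_comp_perm (fun l => X l ω), Equiv.swap_apply_right]
  simpa only [Set.preimage, Set.mem_Iio, Set.mem_ofPred_eq, hrank] using hswap

lemma natCast_le_card_mul_measure_strictRank_lt [Fintype ι] [IsProbabilityMeasure μ]
    {X : ι → Ω → α} (hX : Exchangeable X μ) {t : ℕ} (ht : t ≤ Fintype.card ι) (i : ι) :
    (t : ENNReal) ≤ Fintype.card ι * μ {ω | strictRank (fun l => X l ω) i < t} := by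
  have hmeas (j : ι) : NullMeasurableSet {ω | strictRank (fun l => X l ω) j < t} μ :=
    (hX 1).aemeasurable_snd.nullMeasurableSet_preimage
      (measurable_strictRank j (measurableSet_Iio (a := t)))
  calc (t : ENNReal) = t * μ Set.univ := by rw [measure_univ, mul_one]
    _ ≤ ∑ j, μ {ω | strictRank (fun l => X l ω) j < t} :=
      natCast_mul_measure_univ_le_sum_measure hmeas fun ω => by
        simpa using le_card_strictRank_lt (fun l => X l ω) ht
    _ = ∑ _j : ι, μ {ω | strictRank (fun l => X l ω) i < t} :=
      Finset.sum_congr rfl fun j _ => hX.measure_strictRank_lt_eq t j i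
    _ = Fintype.card ι * μ {ω | strictRank (fun l => X l ω) i < t} := by
      rw [Finset.sum_const, Finset.card_univ, nsmul_eq_mul]

end Exchangeable

lemma Exchangeable.ofReal_le_measure_last_le_kthSmallest {Ω α : Type*} [MeasurableSpace Ω]
    [ConditionallyCompleteLinearOrder α] [TopologicalSpace α] [OrderClosedTopology α]
    [SecondCountableTopology α] [MeasurableSpace α] [OpensMeasurableSpace α]
    {μ : Measure Ω} [IsProbabilityMeasure μ] {m t : ℕ} {X : Fin (m + 1) → Ω → α}
    (hX : Exchangeable X μ) {φ : ℝ} (hφt : φ * (m + 1) ≤ t) (htm : t ≤ m) :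
    ENNReal.ofReal φ ≤
      μ {ω | X (Fin.last m) ω ≤ kthSmallest (fun i : Fin m => X i.castSucc ω) t} := by
  have hcount : (t : ENNReal) ≤
      (m + 1 : ℕ) * μ {ω | strictRank (fun l => X l ω) (Fin.last m) < t} := by
    simpa only [Fintype.card_fin] using
      hX.natCast_le_card_mul_measure_strictRank_lt (by simpa using htm.trans m.le_succ) (Fin.last m)
  have hφ_mul : (m + 1 : ℕ) * ENNReal.ofReal φ ≤ t := by
    rw [mul_comm, ← ENNReal.ofReal_natCast, ← ENNReal.ofReal_natCast,
      ← ENNReal.ofReal_mul' (Nat.cast_nonneg _)]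
    exact ENNReal.ofReal_le_ofReal (mod_cast hφt)
  calc ENNReal.ofReal φ ≤ μ {ω | strictRank (fun l => X l ω) (Fin.last m) < t} :=
      (ENNReal.mul_le_mul_iff_right (by simp) (ENNReal.natCast_ne_top _)).mp (hφ_mul.trans hcount)
    _ ≤ μ {ω | X (Fin.last m) ω ≤ kthSmallest (fun i : Fin m => X i.castSucc ω) t} :=
      measure_mono fun _ hω => le_kthSmallest_of_strictRank_last_lt htm hω

section NestedIndex

variable {𝒳 : Type*} {S : ℕ → Set 𝒳} {k : ℕ}

lemma nestedIndex_spec {y : 𝒳} (hy : ∃ j, 1 ≤ j ∧ j ≤ k ∧ y ∈ S j) :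
    1 ≤ nestedIndex S k y ∧ nestedIndex S k y ≤ k ∧ y ∈ S (nestedIndex S k y) :=
  Nat.sInf_mem (s := {j | 1 ≤ j ∧ j ≤ k ∧ y ∈ S j}) hy

lemma mem_of_nestedIndex_le (hS : ∀ i j, 1 ≤ i → i ≤ j → j ≤ k → S i ⊆ S j) {y : 𝒳}
    (hy : ∃ j, 1 ≤ j ∧ j ≤ k ∧ y ∈ S j) {q : ℕ} (hyq : nestedIndex S k y ≤ q) (hqk : q ≤ k) :
    y ∈ S q :=
  have ⟨one_le_index, _, mem_index⟩ := nestedIndex_spec hy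
  hS _ q one_le_index hyq hqk mem_index

lemma measurable_nestedIndex [MeasurableSpace 𝒳]
    (hS : ∀ j, 1 ≤ j → j ≤ k → MeasurableSet (S j))
    (hcover : ∀ y, ∃ j, 1 ≤ j ∧ j ≤ k ∧ y ∈ S j) : Measurable (nestedIndex S k) := by
  classical
  have hfind : nestedIndex S k = fun y => Nat.find (hcover y) :=
    funext fun y => ((Nat.find_eq_iff (hcover y)).mpr
      ⟨nestedIndex_spec (hcover y), fun _ hj => Nat.notMem_of_lt_sInf hj⟩).symm
  rw [hfind]
  refine measurable_find hcover fun j => ?_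
  by_cases hj : 1 ≤ j ∧ j ≤ k
  · simpa [hj] using hS j hj.1 hj.2
  · simp [← and_assoc, hj]

end NestedIndex

/-- validity of split conformal prediction over a fixed nested
family `S 1 ⊆ S 2 ⊆ ⋯ ⊆ S k = 𝒳` of measurable candidate prediction sets. -/
theorem split_conformal_nested_family {Ω 𝒳 : Type*}
    [MeasurableSpace Ω] [MeasurableSpace 𝒳]
    (ℙ : Measure Ω) [IsProbabilityMeasure ℙ]
    (k : ℕ) (hk : 1 ≤ k) (S : ℕ → Set 𝒳)
    (hSmeas : ∀ j, MeasurableSet (S j))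
    (hSmono : ∀ i j, 1 ≤ i → i ≤ j → j ≤ k → S i ⊆ S j)
    (hSk : S k = Set.univ)
    (m : ℕ) (Y : Fin (m + 1) → Ω → 𝒳) (hmeas : ∀ i, Measurable (Y i))
    (hexch : ∀ σ : Equiv.Perm (Fin (m + 1)),
      Measure.map (fun ω => fun i => Y (σ i) ω) ℙ =
        Measure.map (fun ω => fun i => Y i ω) ℙ)
    (φ : ℝ) (hφ : φ ∈ Set.Ioo (0:ℝ) 1)
    (t : ℕ) (ht : t = ⌈φ * (m + 1)⌉₊) (htm : t ≤ m) :
    ENNReal.ofReal φ ≤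
      ℙ {ω | Y (Fin.last m) ω ∈
        S (kthSmallest
            (fun i : Fin m => nestedIndex S k (Y i.castSucc ω)) t)} := by
  have hcover (y : 𝒳) : ∃ j, 1 ≤ j ∧ j ≤ k ∧ y ∈ S j := ⟨k, hk, le_rfl, hSk ▸ Set.mem_univ y⟩
  have hY : Exchangeable Y ℙ := fun σ =>
    ⟨(measurable_pi_lambda _ fun i => hmeas (σ i)).aemeasurable,
      (measurable_pi_lambda _ hmeas).aemeasurable, hexch σ⟩
  have hscore : Exchangeable (fun i ω => nestedIndex S k (Y i ω)) ℙ :=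
    hY.comp_measurable (measurable_nestedIndex (fun j _ _ => hSmeas j) hcover)
  have ht_pos : 0 < t := ht ▸ Nat.ceil_pos.mpr (mul_pos hφ.1 m.cast_add_one_pos)
  have hφt : φ * (m + 1) ≤ t := ht ▸ Nat.le_ceil _
  refine (hscore.ofReal_le_measure_last_le_kthSmallest hφt htm).trans (measure_mono fun ω hω => ?_)
  exact mem_of_nestedIndex_le hSmono (hcover _) hω
    (kthSmallest_le_of_forall_le ht_pos htm fun i => (nestedIndex_spec (hcover _)).2.1)
end

section
/- Let H = (V, 𝓔) be a finite weighted hypergraph with total weight W, let λ ≥ 0, and construct the bipartite flow network with node set {s, t} ∪ {u_e : e ∈ 𝓔} ∪ {n_v : v ∈ V}, an arc (s, u_e) of capacity λ·w_e for each e ∈ 𝓔, an arc (n_v, t) of capacity 1 for each v ∈ V, and an arc (u_e, n_v) of infinite capacity whenever v ∈ e. For K ⊆ V, the s–t cut whose source side is {s} ∪ {u_e : e ⊆ K} ∪ {n_v : v ∈ K} cuts no infinite-capacity arc and has capacity exactly |K| + λ·(W − e(K)); consequently, the minimum over K ⊆ V of Φ(K, λ) = |K| − λ·e(K) equals the minimum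 cut capacity over all such cuts minus λ·W. -/
open Finset
open scoped ENNReal

/-- Total weight of the hypergraph. -/
noncomputable def totalWeight {V : Type*} [DecidableEq V]
    (𝓔 : Finset (Finset V)) (w : Finset V → ℝ) : ℝ :=
  ∑ e ∈ 𝓔, w e

/-- Nodes of the bipartite flow network: the source `s`, the sink `t`, a node
`u_e` for each hyperedge `e`, and a node `n_v` for each vertex `v`. -/
inductive FlowNode (V : Type*) where
  | src : FlowNode V
  | sink : FlowNode V
  | edgeNode : Finset V → FlowNode V
  | vertNode : V → FlowNode V

open Classical in
/-- Arc capacities of the parametric flow network: `cap (s, u_e) = λ·w_e`,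
`cap (n_v, t) = 1`, `cap (u_e, n_v) = ∞` whenever `v ∈ e`, and `0` for all
other node pairs. -/
noncomputable def flowCap {V : Type*} (𝓔 : Finset (Finset V))
    (w : Finset V → ℝ) (lam : ℝ) : FlowNode V → FlowNode V → ℝ≥0∞
  | .src, .edgeNode e => if e ∈ 𝓔 then ENNReal.ofReal (lam * w e) else 0
  | .vertNode _, .sink => 1
  | .edgeNode e, .vertNode v => if e ∈ 𝓔 ∧ v ∈ e then ⊤ else 0
  | _, _ => 0

open Classical in
/-- Capacity of the `s`–`t` cut with source side `X`: the total capacity of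
arcs from `X` to its complement. -/
noncomputable def cutCapacity {V : Type*} (cap : FlowNode V → FlowNode V → ℝ≥0∞)
    (X : Set (FlowNode V)) : ℝ≥0∞ :=
  ∑' a : FlowNode V, ∑' b : FlowNode V, if a ∈ X ∧ b ∉ X then cap a b else 0

/-- The source side of the cut associated with a vertex set `K`:
`{s} ∪ {u_e : e ∈ 𝓔, e ⊆ K} ∪ {n_v : v ∈ K}`. -/
def sourceSide {V : Type*} (𝓔 : Finset (Finset V)) (K : Finset V) :
    Set (FlowNode V) :=
  {FlowNode.src} ∪ (FlowNode.edgeNode '' {e | e ∈ 𝓔 ∧ e ⊆ K}) ∪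
    (FlowNode.vertNode '' ↑K)

/-!
Let `X` be the source side of a cut that crosses no infinite arc. The arcs it crosses are then the
`(s, u_e)` with `u_e ∉ X` and the `(n_v, t)` with `n_v ∈ X`. For the side attached to `K` these are
the hyperedges not contained in `K`, of total weight `W - e(K)`, and the vertices of `K`. So the
capacity is `Φ(K, λ) + λ W`, and the constant `λ W` comes out of the infimum.
-/

section Network

variable {V : Type*} {𝓔 : Finset (Finset V)} {w : Finset V → ℝ} {lam : ℝ}

/-- The decomposition of the node set into source, sink, hyperedge nodes and vertex nodes, which
turns sums over all nodes into sums over each kind. -/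
def FlowNode.equivSum : FlowNode V ≃ (Unit ⊕ Unit) ⊕ (Finset V ⊕ V) where
  toFun
    | .src => .inl (.inl ())
    | .sink => .inl (.inr ())
    | .edgeNode e => .inr (.inl e)
    | .vertNode v => .inr (.inr v)
  invFun
    | .inl (.inl _) => .src
    | .inl (.inr _) => .sink
    | .inr (.inl e) => .edgeNode e
    | .inr (.inr v) => .vertNode v
  left_inv := by rintro (_ | _ | _ | _) <;> rfl
  right_inv := by rintro ((_ | _) | (_ | _)) <;> rfl

theorem FlowNode.tsum_eq (f : FlowNode V → ℝ≥0∞) :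
    ∑' a, f a = f .src + f .sink + (∑' e, f (.edgeNode e) + ∑' v, f (.vertNode v)) := by
  rw [← FlowNode.equivSum.symm.tsum_eq f,
    ENNReal.summable.tsum_sum ENNReal.summable, ENNReal.summable.tsum_sum ENNReal.summable,
    ENNReal.summable.tsum_sum ENNReal.summable]
  simp [FlowNode.equivSum]

theorem flowCap_eq_top_iff {a b : FlowNode V} :
    flowCap 𝓔 w lam a b = ⊤ ↔ ∃ e ∈ 𝓔, ∃ v ∈ e, a = .edgeNode e ∧ b = .vertNode v := by
  cases a <;> cases b <;> simp [flowCap, ite_eq_iff]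

open Classical in
theorem cutCapacity_flowCap_of_ne_top {X : Set (FlowNode V)}
    (hsrc : .src ∈ X) (hsink : .sink ∉ X)
    (hX : ∀ a ∈ X, ∀ b ∉ X, flowCap 𝓔 w lam a b ≠ ⊤) :
    cutCapacity (flowCap 𝓔 w lam) X =
      {v | .vertNode v ∈ X}.encard + ∑ e ∈ 𝓔 with .edgeNode e ∉ X, ENNReal.ofReal (lam * w e) := by
  have edge_to_vert (e : Finset V) (v : V) :
      (if .edgeNode e ∈ X ∧ .vertNode v ∉ X then
        flowCap 𝓔 w lam (.edgeNode e) (.vertNode v) else 0) = 0 := by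
    refine ite_eq_right_iff.2 fun h => ?_
    have arc_ne_top := hX _ h.1 _ h.2
    rw [flowCap] at arc_ne_top ⊢
    exact if_neg fun hev => arc_ne_top (if_pos hev)
  have src_to_edge : ∑' e, (if .edgeNode e ∉ X then flowCap 𝓔 w lam .src (.edgeNode e) else 0) =
      ∑ e ∈ 𝓔 with .edgeNode e ∉ X, ENNReal.ofReal (lam * w e) := by
    rw [sum_filter, tsum_eq_sum (s := 𝓔) fun e he => by simp [flowCap, he]]
    exact sum_congr rfl fun e he => by simp [flowCap, he]
  have vert_to_sink : ∑' v, (if .vertNode v ∈ X then (1 : ℝ≥0∞) else 0) =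
      {v | .vertNode v ∈ X}.encard := by
    rw [← ENNReal.tsum_set_one, _root_.tsum_subtype _ fun _ => 1]
    rfl
  rw [← vert_to_sink, ← src_to_edge, add_comm]
  simp_rw [cutCapacity, FlowNode.tsum_eq, edge_to_vert]
  simp [hsrc, hsink, flowCap]

theorem src_mem_sourceSide (K : Finset V) : .src ∈ sourceSide 𝓔 K := by
  simp [sourceSide]

theorem sink_notMem_sourceSide (K : Finset V) : .sink ∉ sourceSide 𝓔 K := by
  simp [sourceSide]

theorem edgeNode_mem_sourceSide {K e : Finset V} :
    .edgeNode e ∈ sourceSide 𝓔 K ↔ e ∈ 𝓔 ∧ e ⊆ K := by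
  simp [sourceSide]

theorem vertNode_mem_sourceSide {K : Finset V} {v : V} :
    .vertNode v ∈ sourceSide 𝓔 K ↔ v ∈ K := by
  simp [sourceSide]

theorem flowCap_ne_top_of_mem_sourceSide {K : Finset V} {a b : FlowNode V}
    (ha : a ∈ sourceSide 𝓔 K) (hb : b ∉ sourceSide 𝓔 K) : flowCap 𝓔 w lam a b ≠ ⊤ := by
  rw [Ne, flowCap_eq_top_iff]
  rintro ⟨e, -, v, hve, rfl, rfl⟩
  exact hb (vertNode_mem_sourceSide.2 ((edgeNode_mem_sourceSide.1 ha).2 hve))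

variable [DecidableEq V]

theorem totalWeight_sub_inducedWeight (K : Finset V) :
    totalWeight 𝓔 w - inducedWeight 𝓔 w K = ∑ e ∈ 𝓔 with ¬e ⊆ K, w e :=
  sub_eq_of_eq_add' (sum_filter_add_sum_filter_not 𝓔 (· ⊆ K) w).symm

theorem inducedWeight_le_totalWeight (hw : ∀ e ∈ 𝓔, 0 ≤ w e) (K : Finset V) :
    inducedWeight 𝓔 w K ≤ totalWeight 𝓔 w :=
  sum_le_sum_of_subset_of_nonneg (filter_subset _ _) fun e he _ => hw e he

theorem cutCapacity_sourceSide_eq_card_add_sum (K : Finset V) :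
    cutCapacity (flowCap 𝓔 w lam) (sourceSide 𝓔 K) =
      K.card + ∑ e ∈ 𝓔 with ¬e ⊆ K, ENNReal.ofReal (lam * w e) := by
  classical
  rw [cutCapacity_flowCap_of_ne_top (src_mem_sourceSide K) (sink_notMem_sourceSide K)
    fun a ha b hb => flowCap_ne_top_of_mem_sourceSide ha hb]
  congr 1
  · simp [vertNode_mem_sourceSide]
  · exact sum_congr (filter_congr fun e he => by simp [edgeNode_mem_sourceSide, he]) fun _ _ => rfl

theorem cutCapacity_sourceSide (hw : ∀ e ∈ 𝓔, 0 ≤ w e) (hlam : 0 ≤ lam) (K : Finset V) :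
    cutCapacity (flowCap 𝓔 w lam) (sourceSide 𝓔 K) =
      ENNReal.ofReal (K.card + lam * (totalWeight 𝓔 w - inducedWeight 𝓔 w K)) := by
  have arc_nonneg : ∀ e ∈ 𝓔.filter (¬· ⊆ K), 0 ≤ lam * w e := fun e he =>
    mul_nonneg hlam (hw e (mem_filter.1 he).1)
  rw [cutCapacity_sourceSide_eq_card_add_sum, totalWeight_sub_inducedWeight, mul_sum,
    ENNReal.ofReal_add K.card.cast_nonneg (sum_nonneg arc_nonneg), ENNReal.ofReal_natCast,
    ENNReal.ofReal_sum_of_nonneg arc_nonneg]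

theorem toReal_cutCapacity_sourceSide (hw : ∀ e ∈ 𝓔, 0 ≤ w e) (hlam : 0 ≤ lam) (K : Finset V) :
    (cutCapacity (flowCap 𝓔 w lam) (sourceSide 𝓔 K)).toReal =
      K.card + lam * (totalWeight 𝓔 w - inducedWeight 𝓔 w K) := by
  rw [cutCapacity_sourceSide hw hlam, ENNReal.toReal_ofReal]
  exact add_nonneg K.card.cast_nonneg
    (mul_nonneg hlam (sub_nonneg.2 (inducedWeight_le_totalWeight hw K)))

theorem iInf_card_sub_mul_inducedWeight (hw : ∀ e ∈ 𝓔, 0 ≤ w e) (hlam : 0 ≤ lam) :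
    ⨅ K : Finset V, ((K.card : ℝ) - lam * inducedWeight 𝓔 w K) =
      (⨅ K : Finset V, cutCapacity (flowCap 𝓔 w lam) (sourceSide 𝓔 K)).toReal -
        lam * totalWeight 𝓔 w := by
  have cut_ne_top (K : Finset V) : cutCapacity (flowCap 𝓔 w lam) (sourceSide 𝓔 K) ≠ ⊤ := by
    rw [cutCapacity_sourceSide hw hlam]
    exact ENNReal.ofReal_ne_top
  have cut_bddBelow : BddBelow (Set.range fun K : Finset V =>
      (cutCapacity (flowCap 𝓔 w lam) (sourceSide 𝓔 K)).toReal) :=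
    ⟨0, Set.forall_mem_range.2 fun _ => ENNReal.toReal_nonneg⟩
  rw [ENNReal.toReal_iInf cut_ne_top, ciInf_sub cut_bddBelow]
  refine iInf_congr fun K => ?_
  rw [toReal_cutCapacity_sourceSide hw hlam]
  ring

end Network

theorem lagrangian_as_parametric_min_cut_general {V : Type*} [DecidableEq V]
    (𝓔 : Finset (Finset V)) (w : Finset V → ℝ) (hw : ∀ e ∈ 𝓔, 0 ≤ w e)
    (lam : ℝ) (hlam : 0 ≤ lam) :
    (∀ K : Finset V, ∀ a ∈ sourceSide 𝓔 K, ∀ b ∉ sourceSide 𝓔 K,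
      flowCap 𝓔 w lam a b ≠ ⊤) ∧
    (∀ K : Finset V,
      cutCapacity (flowCap 𝓔 w lam) (sourceSide 𝓔 K) =
        ENNReal.ofReal ((K.card : ℝ) +
          lam * (totalWeight 𝓔 w - inducedWeight 𝓔 w K))) ∧
    (⨅ K : Finset V, ((K.card : ℝ) - lam * inducedWeight 𝓔 w K)) =
      (⨅ K : Finset V, cutCapacity (flowCap 𝓔 w lam) (sourceSide 𝓔 K)).toReal -
        lam * totalWeight 𝓔 w :=
  ⟨fun _ _ ha _ hb => flowCap_ne_top_of_mem_sourceSide ha hb, cutCapacity_sourceSide hw hlam,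
    iInf_card_sub_mul_inducedWeight hw hlam⟩

/-- the reduction of the Lagrangian to parametric minimum cut.
For every `K ⊆ V`, the cut with source side
`{s} ∪ {u_e : e ⊆ K} ∪ {n_v : v ∈ K}` cuts no infinite-capacity arc and has
capacity exactly `|K| + λ·(W - e(K))`; consequently
`min_K Φ(K,λ) = (min over such cuts of the cut capacity) - λ·W`. -/
theorem lagrangian_as_parametric_min_cut {V : Type*} [Fintype V] [DecidableEq V]
    (𝓔 : Finset (Finset V)) (w : Finset V → ℝ) (hw : ∀ e ∈ 𝓔, 0 ≤ w e)
    (lam : ℝ) (hlam : 0 ≤ lam) :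
    (∀ K : Finset V, ∀ a ∈ sourceSide 𝓔 K, ∀ b ∉ sourceSide 𝓔 K,
      flowCap 𝓔 w lam a b ≠ ⊤) ∧
    (∀ K : Finset V,
      cutCapacity (flowCap 𝓔 w lam) (sourceSide 𝓔 K) =
        ENNReal.ofReal ((K.card : ℝ) +
          lam * (totalWeight 𝓔 w - inducedWeight 𝓔 w K))) ∧
    (⨅ K : Finset V, ((K.card : ℝ) - lam * inducedWeight 𝓔 w K)) =
      (⨅ K : Finset V, cutCapacity (flowCap 𝓔 w lam) (sourceSide 𝓔 K)).toReal -
        lam * totalWeight 𝓔 w :=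
  lagrangian_as_parametric_min_cut_general 𝓔 w hw lam hlam
end
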